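/- (Proposition 2.) Let ρ ∈ [0,1], Δ > 0, F ∈ ℝ^{M×N} and y ∈ ℝ^M. For every R ∈ ℝ^N and Σ ∈ (0,∞)^N, the constrained Bethe free energy satisfies (M/2)·log(2πΔ) ≤ F_Bethe(R,Σ) ≤ F_MF(R,Σ); in particular F_Bethe is bounded below and bounded above by the mean-field free energy. -/

import Mathlib

open MeasureTheory ProbabilityTheory

/-- The prior `P₀ = ρ·N(0,1) + (1-ρ)·δ₀`. -/
noncomputable def P0 (ρ : ℝ) : Measure ℝ :=
  ENNReal.ofReal ρ • gaussianReal 0 1 + ENNReal.ofReal (1 - ρ) • Measure.dirac 0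

/-- Partition function `Z(R,Σ) = ∫ exp(-(x-R)²/(2Σ²)) dP₀(x)`. -/
noncomputable def Zpart (ρ R σ : ℝ) : ℝ :=
  ∫ x, Real.exp (-(x - R) ^ 2 / (2 * σ ^ 2)) ∂(P0 ρ)

/-- Posterior mean `f_a(R,Σ)`. -/
noncomputable def fa (ρ R σ : ℝ) : ℝ :=
  (Zpart ρ R σ)⁻¹ * ∫ x, x * Real.exp (-(x - R) ^ 2 / (2 * σ ^ 2)) ∂(P0 ρ)

/-- Posterior variance `f_c(R,Σ)`. -/
noncomputable def fc (ρ R σ : ℝ) : ℝ :=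
  (Zpart ρ R σ)⁻¹ * (∫ x, x ^ 2 * Real.exp (-(x - R) ^ 2 / (2 * σ ^ 2)) ∂(P0 ρ))
    - fa ρ R σ ^ 2

/-- The (unconstrained) mean-field free energy `F_MF(R,Σ,a,c)`. -/
noncomputable def FMF (ρ : ℝ) {M N : ℕ} (F : Fin M → Fin N → ℝ) (y : Fin M → ℝ)
    (Δ : ℝ) (R Sv a c : Fin N → ℝ) : ℝ :=
  (M : ℝ) / 2 * Real.log (2 * Real.pi * Δ)
    + 1 / (2 * Δ) * ∑ μ, ((y μ - ∑ i, F μ i * a i) ^ 2 + ∑ i, F μ i ^ 2 * c i)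
    - ∑ i, (Real.log (Zpart ρ (R i) (Sv i)) + (c i + (a i - R i) ^ 2) / (2 * Sv i ^ 2))

/-- The (unconstrained) Bethe free energy `F_B(R,Σ,a,c)`. -/
noncomputable def FB (ρ : ℝ) {M N : ℕ} (F : Fin M → Fin N → ℝ) (y : Fin M → ℝ)
    (Δ : ℝ) (R Sv a c : Fin N → ℝ) : ℝ :=
  1 / (2 * Δ) * ∑ μ, (y μ - ∑ i, F μ i * a i) ^ 2
    + (M : ℝ) / 2 * Real.log (2 * Real.pi * Δ)
    + 1 / 2 * ∑ μ, Real.log (1 + (∑ i, F μ i ^ 2 * c i) / Δ)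
    - ∑ i, (Real.log (Zpart ρ (R i) (Sv i)) + (c i + (a i - R i) ^ 2) / (2 * Sv i ^ 2))

/-- Gibbs' inequality for a weight `exp (-g)` against a probability measure. -/
theorem log_integral_exp_neg_add_le_zero {P : Measure ℝ} [IsProbabilityMeasure P] {g : ℝ → ℝ}
    (hexp : Integrable (fun x => Real.exp (-g x)) P)
    (hgexp : Integrable (fun x => g x * Real.exp (-g x)) P) :
    Real.log (∫ x, Real.exp (-g x) ∂P)
      + (∫ x, Real.exp (-g x) ∂P)⁻¹ * ∫ x, g x * Real.exp (-g x) ∂P ≤ 0 := by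
  have hZ : 0 < ∫ x, Real.exp (-g x) ∂P := integral_exp_pos hexp
  set Z := ∫ x, Real.exp (-g x) ∂P with hZdef
  have hpoint : ∀ x, g x * Real.exp (-g x) ≤ Z - (Real.log Z + 1) * Real.exp (-g x) := by
    intro x
    have hlog := Real.log_le_sub_one_of_pos (div_pos hZ (Real.exp_pos (-g x)))
    rw [Real.log_div hZ.ne' (Real.exp_pos _).ne', Real.log_exp] at hlog
    have hmul := mul_le_mul_of_nonneg_right hlog (Real.exp_pos (-g x)).le
    rw [sub_mul (Z / _), div_mul_cancel₀ _ (Real.exp_pos _).ne'] at hmul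
    linarith
  have hint := integral_mono hgexp
    ((integrable_const Z).sub (hexp.const_mul (Real.log Z + 1))) hpoint
  rw [integral_sub' (integrable_const Z) (hexp.const_mul _), integral_const_mul, ← hZdef] at hint
  simp only [integral_const, probReal_univ, one_smul] at hint
  have hscaled := mul_le_mul_of_nonneg_left hint (inv_pos.mpr hZ).le
  have hcancel : Z⁻¹ * (Z - (Real.log Z + 1) * Z) = -Real.log Z := by
    field_simp
    ring
  linarith

theorem isProbabilityMeasure_P0 {ρ : ℝ} (hρ : ρ ∈ Set.Icc (0 : ℝ) 1) :
    IsProbabilityMeasure (P0 ρ) := by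
  constructor
  simp only [P0, Measure.coe_add, Measure.coe_smul, Pi.add_apply, Pi.smul_apply, measure_univ,
    smul_eq_mul, mul_one]
  rw [← ENNReal.ofReal_add hρ.1 (sub_nonneg.mpr hρ.2)]
  simp

theorem integrable_pow_P0 (ρ : ℝ) (n : ℕ) : Integrable (fun x : ℝ => x ^ n) (P0 ρ) := by
  have hgauss : Integrable (fun x : ℝ => x ^ n) (gaussianReal 0 1) :=
    ((memLp_id_gaussianReal (μ := 0) (v := 1) n).integrable_norm_pow').mono
      (by fun_prop) (by simp)
  have hdirac : Integrable (fun x : ℝ => x ^ n) (Measure.dirac 0) :=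
    integrable_dirac (by simp)
  exact (hgauss.smul_measure ENNReal.ofReal_ne_top).add_measure
    (hdirac.smul_measure ENNReal.ofReal_ne_top)

theorem integrable_pow_mul_exp_P0 (ρ R σ : ℝ) (n : ℕ) :
    Integrable (fun x : ℝ => x ^ n * Real.exp (-(x - R) ^ 2 / (2 * σ ^ 2))) (P0 ρ) := by
  refine (integrable_pow_P0 ρ n).mono (by fun_prop) (ae_of_all _ fun x => ?_)
  rw [norm_mul, Real.norm_eq_abs (Real.exp _), Real.abs_exp]
  refine mul_le_of_le_one_right (norm_nonneg _) (Real.exp_le_one_iff.mpr ?_)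
  rw [neg_div]
  exact neg_nonpos.mpr (by positivity)

theorem integrable_exp_P0 (ρ R σ : ℝ) :
    Integrable (fun x : ℝ => Real.exp (-(x - R) ^ 2 / (2 * σ ^ 2))) (P0 ρ) := by
  simpa using integrable_pow_mul_exp_P0 ρ R σ 0

theorem Zpart_pos {ρ : ℝ} (hρ : ρ ∈ Set.Icc (0 : ℝ) 1) (R σ : ℝ) : 0 < Zpart ρ R σ :=
  have := isProbabilityMeasure_P0 hρ
  integral_exp_pos (integrable_exp_P0 ρ R σ)

theorem integrable_sq_sub_mul_exp_P0 (ρ R σ t : ℝ) :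
    Integrable (fun x : ℝ => (x - t) ^ 2 * Real.exp (-(x - R) ^ 2 / (2 * σ ^ 2))) (P0 ρ) := by
  have hsum := ((integrable_pow_mul_exp_P0 ρ R σ 2).sub
    ((integrable_pow_mul_exp_P0 ρ R σ 1).const_mul (2 * t))).add
    ((integrable_pow_mul_exp_P0 ρ R σ 0).const_mul (t ^ 2))
  refine hsum.congr (ae_of_all _ fun x => ?_)
  simp only [Pi.add_apply, Pi.sub_apply]
  ring

/-- Bias-variance decomposition of the second moment around `t` of the tilted prior. -/
theorem fc_add_sq_eq {ρ : ℝ} (hρ : ρ ∈ Set.Icc (0 : ℝ) 1) (R σ t : ℝ) :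
    fc ρ R σ + (fa ρ R σ - t) ^ 2 = (Zpart ρ R σ)⁻¹ *
      ∫ x, (x - t) ^ 2 * Real.exp (-(x - R) ^ 2 / (2 * σ ^ 2)) ∂(P0 ρ) := by
  have hone := integrable_pow_mul_exp_P0 ρ R σ 1
  simp only [pow_one] at hone
  have hexpand : ∫ x, (x - t) ^ 2 * Real.exp (-(x - R) ^ 2 / (2 * σ ^ 2)) ∂(P0 ρ)
      = (∫ x, x ^ 2 * Real.exp (-(x - R) ^ 2 / (2 * σ ^ 2)) ∂(P0 ρ))
        - 2 * t * (∫ x, x * Real.exp (-(x - R) ^ 2 / (2 * σ ^ 2)) ∂(P0 ρ))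
        + t ^ 2 * Zpart ρ R σ := by
    rw [Zpart, ← integral_const_mul, ← integral_const_mul,
      ← integral_sub' (integrable_pow_mul_exp_P0 ρ R σ 2) (hone.const_mul _),
      ← integral_add' ((integrable_pow_mul_exp_P0 ρ R σ 2).sub (hone.const_mul _))
        ((integrable_exp_P0 ρ R σ).const_mul _)]
    refine integral_congr_ae (ae_of_all _ fun x => ?_)
    simp only [Pi.add_apply, Pi.sub_apply]
    ring
  have hZ := (Zpart_pos hρ R σ).ne'
  rw [hexpand, fc, fa]
  field_simp
  ring

theorem fc_nonneg {ρ : ℝ} (hρ : ρ ∈ Set.Icc (0 : ℝ) 1) (R σ : ℝ) : 0 ≤ fc ρ R σ := by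
  have hvar := fc_add_sq_eq hρ R σ (fa ρ R σ)
  rw [sub_self, zero_pow two_ne_zero, add_zero] at hvar
  rw [hvar]
  exact mul_nonneg (inv_pos.mpr (Zpart_pos hρ R σ)).le
    (integral_nonneg fun x => by positivity)

theorem log_Zpart_add_le_zero {ρ : ℝ} (hρ : ρ ∈ Set.Icc (0 : ℝ) 1) (R σ : ℝ) :
    Real.log (Zpart ρ R σ) + (fc ρ R σ + (fa ρ R σ - R) ^ 2) / (2 * σ ^ 2) ≤ 0 := by
  have := isProbabilityMeasure_P0 hρ
  have hweight : ∀ x : ℝ, (x - R) ^ 2 / (2 * σ ^ 2) * Real.exp (-((x - R) ^ 2 / (2 * σ ^ 2)))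
      = (2 * σ ^ 2)⁻¹ * ((x - R) ^ 2 * Real.exp (-(x - R) ^ 2 / (2 * σ ^ 2))) := by
    intro x
    rw [neg_div]
    ring
  have hgibbs := log_integral_exp_neg_add_le_zero (P := P0 ρ)
    (g := fun x => (x - R) ^ 2 / (2 * σ ^ 2))
    (by simpa only [neg_div] using integrable_exp_P0 ρ R σ)
    (by simpa only [hweight] using
      (integrable_sq_sub_mul_exp_P0 ρ R σ R).const_mul (2 * σ ^ 2)⁻¹)
  simp only [hweight, integral_const_mul] at hgibbs
  simp only [← neg_div] at hgibbs
  rw [← Zpart] at hgibbs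
  rw [fc_add_sq_eq hρ R σ R]
  convert hgibbs using 2
  ring

/-- Proposition 2: with `a_i = f_a(R_i,Σ_i)` and `c_i = f_c(R_i,Σ_i)`
(the constrained free energies), for every `R` and `Σ ∈ (0,∞)^N` one has
`(M/2)·log(2πΔ) ≤ F_Bethe(R,Σ) ≤ F_MF(R,Σ)`. -/
theorem stmt8 (ρ : ℝ) (hρ : ρ ∈ Set.Icc (0 : ℝ) 1) {M N : ℕ}
    (F : Fin M → Fin N → ℝ) (y : Fin M → ℝ) (Δ : ℝ) (hΔ : 0 < Δ)
    (R Sv : Fin N → ℝ) (hS : ∀ i, 0 < Sv i)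
    (a c : Fin N → ℝ) (ha : ∀ i, a i = fa ρ (R i) (Sv i))
    (hc : ∀ i, c i = fc ρ (R i) (Sv i)) :
    (M : ℝ) / 2 * Real.log (2 * Real.pi * Δ) ≤ FB ρ F y Δ R Sv a c ∧
    FB ρ F y Δ R Sv a c ≤ FMF ρ F y Δ R Sv a c := by
  have hvar : ∀ μ, 0 ≤ (∑ i, F μ i ^ 2 * c i) / Δ := fun μ =>
    div_nonneg (Finset.sum_nonneg fun i _ =>
      mul_nonneg (sq_nonneg _) (hc i ▸ fc_nonneg hρ (R i) (Sv i))) hΔ.le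
  constructor
  · have hentropy : ∑ i, (Real.log (Zpart ρ (R i) (Sv i))
        + (c i + (a i - R i) ^ 2) / (2 * Sv i ^ 2)) ≤ 0 := by
      refine Finset.sum_nonpos fun i _ => ?_
      rw [ha i, hc i]
      exact log_Zpart_add_le_zero hρ (R i) (Sv i)
    have hlog : 0 ≤ ∑ μ, Real.log (1 + (∑ i, F μ i ^ 2 * c i) / Δ) :=
      Finset.sum_nonneg fun μ _ => Real.log_nonneg (by linarith [hvar μ])
    have hsq : 0 ≤ 1 / (2 * Δ) * ∑ μ, (y μ - ∑ i, F μ i * a i) ^ 2 := by positivity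
    unfold FB
    linarith
  · have hlog : ∑ μ, Real.log (1 + (∑ i, F μ i ^ 2 * c i) / Δ)
        ≤ ∑ μ, (∑ i, F μ i ^ 2 * c i) / Δ :=
      Finset.sum_le_sum fun μ _ => by
        linarith [Real.log_le_sub_one_of_pos (by linarith [hvar μ] :
          0 < 1 + (∑ i, F μ i ^ 2 * c i) / Δ)]
    have hscale : 1 / (2 * Δ) * ∑ μ, ∑ i, F μ i ^ 2 * c i
        = 1 / 2 * ∑ μ, (∑ i, F μ i ^ 2 * c i) / Δ := by
      rw [← Finset.sum_div]
      ring
    unfold FB FMF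
    simp only [Finset.sum_add_distrib, mul_add]
    linarith
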